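/- arXiv:2509.02303 — 5 statements merged into one kernel-verified Lean document; each statement's English description precedes it below -/
import Mathlib

section
/- Assume a_i + b_j ≠ 0 for all i, j, and let s_0 be a real number with s_0 − (n−n')/2 ∈ ℤ. Then the following are equivalent: (1) for all i, j, Γ(s_0 + |a_i + b_j|) ≠ 0 and Γ(1 − s_0 + |a_i + b_j|) ≠ 0 (where Γ is the complex Gamma function, extended by the value 0 at its poles, i.e. at the nonpositive integers, so this says the archimedean L-factors L(s, Π_∞ × Π'_∞) and L(1−s, Π_∞^∨ × Π'_∞^∨) are holomorphic at s_0); (2) −min_{i,j} |a_i + b_j| < s_0 ≤ min_{i,j} |a_i + b_j|. (This is the paper's explicit description of the set of critical points of L(s, Π × Π').) -/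
/-!
The number `|a_i + b_j|` is `a_i + b_j` up to sign, and both `s₀ + (a_i + b_j)` and
`s₀ - (a_i + b_j)` are integers, so every Gamma factor is evaluated at an integer, where `Γ` has a
pole exactly when the integer is nonpositive. Hence the two factors attached to `(i, j)` are
holomorphic iff `0 < s₀ + |a_i + b_j|` and `s₀ - |a_i + b_j| < 1`. By integrality, the second
condition is `s₀ ≤ |a_i + b_j|`; hence the interval of critical points is closed only on the right.
-/

theorem Gamma_intCast_eq_zero_iff (m : ℤ) : Complex.Gamma (m : ℂ) = 0 ↔ m ≤ 0 := by
  rw [Complex.Gamma_eq_zero_iff]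
  constructor
  · rintro ⟨k, hk⟩
    have hm : m = -(k : ℤ) := by exact_mod_cast hk
    omega
  · intro hm
    obtain ⟨k, rfl⟩ := Int.exists_eq_neg_ofNat hm
    exact ⟨k, by push_cast; rfl⟩

theorem Gamma_ofReal_ne_zero_iff_pos {x : ℝ} (hx : x ∈ Set.range ((↑) : ℤ → ℝ)) :
    Complex.Gamma (x : ℂ) ≠ 0 ↔ 0 < x := by
  obtain ⟨m, rfl⟩ := hx
  rw [Complex.ofReal_intCast, Ne, Gamma_intCast_eq_zero_iff, not_le, Int.cast_pos]

theorem Gamma_one_sub_ofReal_ne_zero_iff_nonpos {x : ℝ} (hx : x ∈ Set.range ((↑) : ℤ → ℝ)) :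
    Complex.Gamma ((1 - x : ℝ) : ℂ) ≠ 0 ↔ x ≤ 0 := by
  obtain ⟨m, rfl⟩ := hx
  rw [Gamma_ofReal_ne_zero_iff_pos ⟨1 - m, by push_cast; rfl⟩, sub_pos, Int.cast_nonpos,
    ← Int.cast_one, Int.cast_lt]
  omega

theorem add_abs_mem_and_sub_abs_mem {G : Type*} [AddGroup G] [LinearOrder G] {S : Set G}
    {s r : G} (hadd : s + r ∈ S) (hsub : s - r ∈ S) : s + |r| ∈ S ∧ s - |r| ∈ S := by
  rcases abs_choice r with habs | habs <;> rw [habs]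
  · exact ⟨hadd, hsub⟩
  · rw [← sub_eq_add_neg, sub_neg_eq_add]
    exact ⟨hsub, hadd⟩

theorem Gamma_add_abs_ne_zero_and_Gamma_one_sub_add_abs_ne_zero_iff {s r : ℝ}
    (hadd : s + r ∈ Set.range ((↑) : ℤ → ℝ)) (hsub : s - r ∈ Set.range ((↑) : ℤ → ℝ)) :
    (Complex.Gamma ((s + |r| : ℝ) : ℂ) ≠ 0 ∧ Complex.Gamma ((1 - s + |r| : ℝ) : ℂ) ≠ 0) ↔
      -|r| < s ∧ s ≤ |r| := by
  obtain ⟨hadd_abs, hsub_abs⟩ := add_abs_mem_and_sub_abs_mem hadd hsub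
  rw [sub_add, Gamma_ofReal_ne_zero_iff_pos hadd_abs,
    Gamma_one_sub_ofReal_ne_zero_iff_nonpos hsub_abs, sub_nonpos, neg_lt_iff_pos_add]

theorem critical_points_iff_general {ι κ : Type*} (n n' : ℕ) (a : ι → ℝ) (b : κ → ℝ)
    (haz : ∀ i, ∃ k : ℤ, a i = (k : ℝ) + ((n : ℝ) - 1) / 2)
    (hbz : ∀ j, ∃ k : ℤ, b j = (k : ℝ) + ((n' : ℝ) - 1) / 2)
    (s₀ : ℝ) (hs : ∃ k : ℤ, s₀ - ((n : ℝ) - (n' : ℝ)) / 2 = (k : ℝ)) :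
    (∀ i j, Complex.Gamma ((s₀ + |a i + b j| : ℝ) : ℂ) ≠ 0 ∧
        Complex.Gamma ((1 - s₀ + |a i + b j| : ℝ) : ℂ) ≠ 0) ↔
      ∀ i j, -|a i + b j| < s₀ ∧ s₀ ≤ |a i + b j| := by
  refine forall₂_congr fun i j => ?_
  obtain ⟨k, hk⟩ := haz i
  obtain ⟨l, hl⟩ := hbz j
  obtain ⟨m, hm⟩ := hs
  have hadd : ((m + k + l + n - 1 : ℤ) : ℝ) = s₀ + (a i + b j) := by push_cast; linarith
  have hsub : ((m - k - l - n' + 1 : ℤ) : ℝ) = s₀ - (a i + b j) := by push_cast; linarith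
  exact Gamma_add_abs_ne_zero_and_Gamma_one_sub_add_abs_ne_zero_iff ⟨_, hadd⟩ ⟨_, hsub⟩

/-- Explicit description of the critical points of a Rankin–Selberg L-function:
for half-integral infinity-type exponents `a_1 > ... > a_n` (in `ℤ + (n−1)/2`) and
`b_1 > ... > b_{n'}` (in `ℤ + (n'−1)/2`) with `a_i + b_j ≠ 0` for all `i, j`, and
for `s_0 ∈ (n−n')/2 + ℤ`, the archimedean L-factors — products of
`Γ(s_0 + |a_i + b_j|)` and `Γ(1 − s_0 + |a_i + b_j|)` — are holomorphic at `s_0`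
(i.e., the complex Gamma function, which vanishes exactly at its poles, the
nonpositive integers, is nonzero at all these points) if and only if
`−min_{i,j} |a_i + b_j| < s_0 ≤ min_{i,j} |a_i + b_j|` (expressed pointwise). -/
theorem critical_points_iff (n n' : ℕ) (hn : 1 ≤ n) (hn' : 1 ≤ n')
    (a b : ℕ → ℝ)
    (ha : ∀ i, 1 ≤ i → i < n → a (i + 1) < a i)
    (hb : ∀ j, 1 ≤ j → j < n' → b (j + 1) < b j)
    (haz : ∀ i ∈ Finset.Icc 1 n, ∃ k : ℤ, a i = (k : ℝ) + ((n : ℝ) - 1) / 2)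
    (hbz : ∀ j ∈ Finset.Icc 1 n', ∃ k : ℤ, b j = (k : ℝ) + ((n' : ℝ) - 1) / 2)
    (hab : ∀ i ∈ Finset.Icc 1 n, ∀ j ∈ Finset.Icc 1 n', a i + b j ≠ 0)
    (s₀ : ℝ) (hs : ∃ k : ℤ, s₀ - ((n : ℝ) - (n' : ℝ)) / 2 = (k : ℝ)) :
    (∀ i ∈ Finset.Icc 1 n, ∀ j ∈ Finset.Icc 1 n',
        Complex.Gamma ((s₀ + |a i + b j| : ℝ) : ℂ) ≠ 0 ∧
        Complex.Gamma ((1 - s₀ + |a i + b j| : ℝ) : ℂ) ≠ 0) ↔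
    (∀ i ∈ Finset.Icc 1 n, ∀ j ∈ Finset.Icc 1 n',
        -|a i + b j| < s₀ ∧ s₀ ≤ |a i + b j|) := by
  simpa only [Subtype.forall] using
    critical_points_iff_general n n' (fun i : Finset.Icc 1 n => a i)
      (fun j : Finset.Icc 1 n' => b j) (fun i => haz i i.2) (fun j => hbz j j.2) s₀ hs
end

section
/- There exists a real number s_0 with s_0 − (n−n')/2 ∈ ℤ such that Γ(s_0 + |a_i + b_j|) ≠ 0 and Γ(1 − s_0 + |a_i + b_j|) ≠ 0 for all i, j, if and only if a_i + b_j ≠ 0 for all 1 ≤ i ≤ n and 1 ≤ j ≤ n'. (This is the paper's criterion: the Rankin–Selberg L-function L(s, Π × Π') has critical points if and only if a_{v,i} + b_{v,j} ≠ 0 for all i and j.) -/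
/-!
The sums `a i + b j` and the admissible points `s₀` all lie in one coset of `ℤ` in `ℝ`. If some sum
vanishes, this coset is `ℤ`, and one of the integers `s₀`, `1 - s₀` is nonpositive, hence a pole of
`Γ`. If no sum vanishes, the representative `s₀ ∈ [0, 1)` makes all the arguments of `Γ` positive.
-/

theorem Gamma_intCast_eq_zero_of_nonpos {m : ℤ} (hm : m ≤ 0) : Complex.Gamma m = 0 := by
  obtain ⟨k, rfl⟩ := Int.exists_eq_neg_ofNat hm
  exact_mod_cast Complex.Gamma_neg_nat_eq_zero k

theorem Gamma_intCast_eq_zero_or_Gamma_one_sub_intCast_eq_zero (m : ℤ) :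
    Complex.Gamma m = 0 ∨ Complex.Gamma (1 - m) = 0 := by
  have h_nonpos : m ≤ 0 ∨ 1 - m ≤ 0 := by omega
  exact_mod_cast h_nonpos.imp Gamma_intCast_eq_zero_of_nonpos Gamma_intCast_eq_zero_of_nonpos

theorem Gamma_add_abs_ne_zero {s x : ℝ} (hs : 0 ≤ s) (hx : x ≠ 0) :
    Complex.Gamma ((s + |x| : ℝ) : ℂ) ≠ 0 :=
  Complex.Gamma_ne_zero_of_re_pos (add_pos_of_nonneg_of_pos hs (abs_pos.mpr hx))

theorem exists_add_sub_half_sub_eq_intCast {r x y : ℝ} {m : ℤ}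
    (hx : ∃ k : ℤ, x = k + (r - 1) / 2) (hy : ∃ k : ℤ, y = k + ((m : ℝ) - 1) / 2) :
    ∃ k : ℤ, x + y - (r - m) / 2 = k := by
  obtain ⟨k, rfl⟩ := hx
  obtain ⟨l, rfl⟩ := hy
  exact ⟨k + l + m - 1, by push_cast; ring⟩

theorem exists_critical_point_iff_general {ι : Type*} {δ : ℝ} {x : ι → ℝ}
    (hx : ∀ i, ∃ k : ℤ, x i - δ = k) :
    (∃ s₀ : ℝ, (∃ k : ℤ, s₀ - δ = k) ∧
      ∀ i, Complex.Gamma ((s₀ + |x i| : ℝ) : ℂ) ≠ 0 ∧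
        Complex.Gamma ((1 - s₀ + |x i| : ℝ) : ℂ) ≠ 0) ↔
    ∀ i, x i ≠ 0 := by
  constructor
  · rintro ⟨s₀, ⟨k, hk⟩, hΓ⟩ i hi
    obtain ⟨l, hl⟩ := hx i
    obtain rfl : s₀ = (k - l : ℤ) := by push_cast; linarith
    have h_pole := Gamma_intCast_eq_zero_or_Gamma_one_sub_intCast_eq_zero (k - l)
    have hΓi := hΓ i
    rw [hi, abs_zero, add_zero, add_zero] at hΓi
    exact h_pole.elim (by exact_mod_cast hΓi.1) (by exact_mod_cast hΓi.2)
  · intro hx_ne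
    refine ⟨Int.fract δ, ⟨-⌊δ⌋, ?_⟩, fun i => ⟨?_, ?_⟩⟩
    · rw [Int.fract_sub_self, Int.cast_neg]
    · exact Gamma_add_abs_ne_zero (Int.fract_nonneg δ) (hx_ne i)
    · exact Gamma_add_abs_ne_zero (sub_nonneg.mpr (Int.fract_lt_one δ).le) (hx_ne i)

/-- The Rankin–Selberg L-function `L(s, Π × Π')` has critical points if and only
if `a_i + b_j ≠ 0` for all `i, j`: for half-integral infinity-type exponents
`a_1 > ... > a_n` (in `ℤ + (n−1)/2`) and `b_1 > ... > b_{n'}` (in `ℤ + (n'−1)/2`),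
there exists `s_0 ∈ (n−n')/2 + ℤ` such that `Γ(s_0 + |a_i + b_j|) ≠ 0` and
`Γ(1 − s_0 + |a_i + b_j|) ≠ 0` for all `i, j` (the complex Gamma function
vanishing exactly at its poles, the nonpositive integers), if and only if
`a_i + b_j ≠ 0` for all `1 ≤ i ≤ n`, `1 ≤ j ≤ n'`. -/
theorem exists_critical_point_iff (n n' : ℕ) (hn : 1 ≤ n) (hn' : 1 ≤ n')
    (a b : ℕ → ℝ)
    (ha : ∀ i, 1 ≤ i → i < n → a (i + 1) < a i)
    (hb : ∀ j, 1 ≤ j → j < n' → b (j + 1) < b j)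
    (haz : ∀ i ∈ Finset.Icc 1 n, ∃ k : ℤ, a i = (k : ℝ) + ((n : ℝ) - 1) / 2)
    (hbz : ∀ j ∈ Finset.Icc 1 n', ∃ k : ℤ, b j = (k : ℝ) + ((n' : ℝ) - 1) / 2) :
    (∃ s₀ : ℝ, (∃ k : ℤ, s₀ - ((n : ℝ) - (n' : ℝ)) / 2 = (k : ℝ)) ∧
      ∀ i ∈ Finset.Icc 1 n, ∀ j ∈ Finset.Icc 1 n',
        Complex.Gamma ((s₀ + |a i + b j| : ℝ) : ℂ) ≠ 0 ∧
        Complex.Gamma ((1 - s₀ + |a i + b j| : ℝ) : ℂ) ≠ 0) ↔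
    (∀ i ∈ Finset.Icc 1 n, ∀ j ∈ Finset.Icc 1 n', a i + b j ≠ 0) := by
  have hab (p : Finset.Icc 1 n × Finset.Icc 1 n') :
      ∃ k : ℤ, a p.1 + b p.2 - ((n : ℝ) - (n' : ℤ)) / 2 = k :=
    exists_add_sub_half_sub_eq_intCast (haz p.1 p.1.2)
      (by simpa only [Int.cast_natCast] using hbz p.2 p.2.2)
  simpa only [Prod.forall, Subtype.forall, Int.cast_natCast] using
    exists_critical_point_iff_general hab
end

section
/- Let p be a prime, let m ≥ 1, and let Γ = C × D be the direct product of a cyclic group C = ⟨c⟩ of order 2 and a cyclic group D of order m. Let W be a nonzero free module over the group algebra ℚ_p[Γ]. Then there exists a ℚ_p-linear functional λ : W → ℚ_p such that λ(c · w) = −λ(w) for all w ∈ W, and such that λ is stabilized by no non-trivial element of D, i.e. for every d ∈ D with d ≠ 1 there exists w ∈ W with λ(d · w) ≠ λ(w). (This is the key construction in the proof of the paper's Theorem 5 (Theorem BS), applied there to W = W^+ ⊗_{ℤ_p} ℚ_p for the principal units of a local field L.) -/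
/-!
A nonzero free module over the group ring `R[G]` maps onto `R[G]`, and the functional can be pulled
back along that surjection. On `R[G]` itself take `x ↦ x(1) - x(c)`: left translation by the
involution `c` swaps the two coefficients, whereas a translate of `1` by `g ∉ {1, c}` is supported
away from both.
-/

open MonoidAlgebra

theorem orderOf_ofAdd_one_prod_one (n : ℕ) (H : Type*) [Monoid H] :
    orderOf (Multiplicative.ofAdd (1 : ZMod n), (1 : H)) = n := by
  simp [Prod.orderOf_mk, ZMod.addOrderOf_one]

theorem exists_surjective_linearMap_of_free (A W : Type*) [Semiring A] [AddCommMonoid W]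
    [Module A W] [Module.Free A W] [Nontrivial W] :
    ∃ f : W →ₗ[A] A, Function.Surjective f := by
  let b := Module.Free.chooseBasis A W
  obtain ⟨i⟩ := b.index_nonempty
  exact ⟨b.coord i, fun a => ⟨a • b i, by simp⟩⟩

section coeffOneSub

variable {R M : Type*} [Ring R] [One M]

/-- The functional `x ↦ x(1) - x(c)` on `R[M]`. When `c` is an involution in a group, it changes
sign under left translation by `c`. -/
noncomputable def coeffOneSub (c : M) : R[M] →ₗ[R] R :=
  (Finsupp.lapply 1 - Finsupp.lapply c) ∘ₗ (coeffLinearEquiv R).toLinearMap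

theorem coeffOneSub_apply (c : M) (x : R[M]) : coeffOneSub c x = x.coeff 1 - x.coeff c :=
  rfl

theorem coeffOneSub_one {c : M} (hc : c ≠ 1) : coeffOneSub c (1 : R[M]) = 1 := by
  simp [coeffOneSub_apply, one_def, hc]

theorem coeffOneSub_single_of_ne {c g : M} (hg : g ≠ 1) (hgc : g ≠ c) (r : R) :
    coeffOneSub c (single g r) = 0 := by
  simp [coeffOneSub_apply, hg.symm, hgc.symm]

end coeffOneSub

theorem coeffOneSub_single_self_mul {R G : Type*} [Ring R] [Group G] {c : G} (hc : c * c = 1)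
    (x : R[G]) : coeffOneSub c (single c 1 * x) = -coeffOneSub c x := by
  have hinv : c⁻¹ = c := inv_eq_of_mul_eq_one_right hc
  simp [coeffOneSub_apply, hinv, hc]

theorem exists_functional_anti_invariant_general {R G W : Type*} [Ring R] [Group G]
    [AddCommGroup W] [Module R[G] W] [Module R W] [IsScalarTower R R[G] W]
    [Module.Free R[G] W] [Nontrivial W] {c : G} (hc : orderOf c = 2) :
    ∃ lam : W →ₗ[R] R,
      (∀ w, lam (single c (1 : R) • w) = -lam w) ∧
      ∀ g, g ≠ 1 → g ≠ c → ∃ w, lam (single g (1 : R) • w) ≠ lam w := by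
  have : Nontrivial R[G] := Module.nontrivial R[G] W
  have : Nontrivial R := Module.nontrivial R R[G]
  obtain ⟨hc_sq, hc_ne⟩ := orderOf_eq_prime_iff.mp hc
  obtain ⟨f, hf⟩ := exists_surjective_linearMap_of_free R[G] W
  refine ⟨coeffOneSub c ∘ₗ f.restrictScalars R, fun w => ?_, fun g hg hgc => ?_⟩
  · simpa using coeffOneSub_single_self_mul (sq c ▸ hc_sq) (f w)
  · obtain ⟨w, hw⟩ := hf 1
    exact ⟨w, by simp [hw, coeffOneSub_one hc_ne, coeffOneSub_single_of_ne hg hgc]⟩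

/-- Let `Γ = C × D` with `C = ⟨c⟩` cyclic of order 2 and `D` cyclic of order `m`
(realized as `Multiplicative (ZMod 2) × Multiplicative (ZMod m)`), and let `W` be
a nonzero free module over the group algebra `ℚ_p[Γ]`. Then there is a
`ℚ_p`-linear functional `λ : W → ℚ_p` with `λ(c · w) = −λ(w)` for all `w`, which
is stabilized by no non-trivial element of `D`: for every `d ≠ 1` in `D` there is
`w ∈ W` with `λ(d · w) ≠ λ(w)`. Here the action of a group element `g` on `W` is
via the corresponding element `single g 1` of the group algebra. -/
theorem exists_functional_anti_invariant (p : ℕ) [Fact p.Prime] (m : ℕ) (hm : 1 ≤ m)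
    (W : Type*) [AddCommGroup W]
    [Module (MonoidAlgebra ℚ_[p] (Multiplicative (ZMod 2) × Multiplicative (ZMod m))) W]
    [Module ℚ_[p] W]
    [IsScalarTower ℚ_[p]
      (MonoidAlgebra ℚ_[p] (Multiplicative (ZMod 2) × Multiplicative (ZMod m))) W]
    [Module.Free (MonoidAlgebra ℚ_[p] (Multiplicative (ZMod 2) × Multiplicative (ZMod m))) W]
    (hW : Nontrivial W) :
    ∃ lam : W →ₗ[ℚ_[p]] ℚ_[p],
      (∀ w : W,
        lam ((MonoidAlgebra.single
          ((Multiplicative.ofAdd (1 : ZMod 2), (1 : Multiplicative (ZMod m))) :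
            Multiplicative (ZMod 2) × Multiplicative (ZMod m)) (1 : ℚ_[p])) • w)
          = - lam w) ∧
      (∀ d : Multiplicative (ZMod m), d ≠ 1 →
        ∃ w : W,
          lam ((MonoidAlgebra.single
            (((1 : Multiplicative (ZMod 2)), d) :
              Multiplicative (ZMod 2) × Multiplicative (ZMod m)) (1 : ℚ_[p])) • w)
            ≠ lam w) := by
  obtain ⟨lam, hneg, hmoved⟩ := exists_functional_anti_invariant_general (R := ℚ_[p]) (W := W)
    (orderOf_ofAdd_one_prod_one 2 (Multiplicative (ZMod m)))
  exact ⟨lam, hneg, fun d hd => hmoved (1, d) (by simp [hd]) (by simp [hd])⟩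
end

section
/- Let p be a prime, m ≥ 1, Γ = C × D with C = ⟨c⟩ of order 2 and D cyclic of order m, and let W be a nonzero free module over ℚ_p[Γ]. Let ψ : (ℚ_p, +) → ℂ^× be a non-trivial group homomorphism. Then there exists a group homomorphism χ : (W, +) → ℂ^× such that (1) χ(c · w) = χ(w)^{−1} for all w ∈ W, and (2) χ is stabilized by no non-trivial element of D, i.e. for every d ∈ D with d ≠ 1 there exists w ∈ W with χ(d · w) ≠ χ(w). (In the paper, χ is obtained by composing an appropriate ℚ_p-linear functional λ on W, with λ∘c = −λ and trivial D-stabilizer, with the character ψ; the resulting χ is used to build an irreducible conjugate self-dual Galois parameter by induction.) -/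
/-!
On the monoid algebra `R[G]` of a monoid with an element `c ≠ 1` of square `1`, the functional
`a ↦ a(1) - a(c)` changes sign under left translation by `c`. It takes the value `x` at `x · 1` and
vanishes at `x · g` for every `g` other than `1` and `c`, so no such `g` fixes it. Pulling it back
along a coordinate functional of a free module and composing with a non-trivial additive character
of `R` gives the required character.
-/

noncomputable section

open MonoidAlgebra (single)

variable {R G M W : Type*}

section AntiCoeff

variable [Ring R]

/-- The functional `a ↦ a(1) - a(c)` on `R[G]`, which translation by an involution `c` negates. -/
def antiCoeff [One G] (c : G) : MonoidAlgebra R G →ₗ[R] R :=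
  (Finsupp.lapply 1 - Finsupp.lapply c) ∘ₗ (MonoidAlgebra.coeffLinearEquiv R).toLinearMap

theorem antiCoeff_apply [One G] (c : G) (a : MonoidAlgebra R G) :
    antiCoeff c a = a.coeff 1 - a.coeff c :=
  rfl

theorem antiCoeff_single_one [One G] {c : G} (hc : c ≠ 1) (x : R) :
    antiCoeff c (single 1 x) = x := by
  simp [antiCoeff_apply, hc]

theorem antiCoeff_single_of_ne [One G] {c g : G} (hg_one : g ≠ 1) (hgc : g ≠ c) (x : R) :
    antiCoeff c (single g x) = 0 := by
  simp [antiCoeff_apply, hg_one.symm, hgc.symm]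

theorem antiCoeff_single_mul_eq_neg [Monoid G] {c : G} (hc : c * c = 1) (a : MonoidAlgebra R G) :
    antiCoeff c (single c 1 * a) = -antiCoeff c a := by
  have mul_eq_iff (g h : G) : c * g = h ↔ g = c * h := by
    constructor <;> rintro rfl <;> rw [← mul_assoc, hc, one_mul]
  have coeff_translate (h : G) : (single c 1 * a).coeff h = a.coeff (c * h) := by
    rw [MonoidAlgebra.coeff_single_mul_eq_mul_coeff (c * h) fun g _ ↦ mul_eq_iff g h, one_mul]
  rw [antiCoeff_apply, antiCoeff_apply, coeff_translate, coeff_translate, mul_one, hc, neg_sub]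

end AntiCoeff

theorem exists_linearMap_apply_eq_one (A W : Type*) [Semiring A] [AddCommMonoid W] [Module A W]
    [Module.Free A W] [Nontrivial W] : ∃ (f : W →ₗ[A] A) (v : W), f v = 1 := by
  let b := Module.Free.chooseBasis A W
  obtain ⟨i⟩ := b.index_nonempty
  exact ⟨b.coord i, b i, by simp⟩

section AntiChar

variable [Ring R] [Monoid G] [AddCommGroup W] [Module (MonoidAlgebra R G) W]

/-- The additive character `w ↦ ψ (f(w)(1) - f(w)(c))` of an `R[G]`-module `W` attached to an
`R[G]`-linear map `f : W → R[G]` and an additive character `ψ` of `R`. For `f` a coordinate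
functional this is the conjugate self-dual character sought. -/
def antiChar [Monoid M] (ψ : AddChar R M) (c : G) (f : W →ₗ[MonoidAlgebra R G] MonoidAlgebra R G) :
    AddChar W M :=
  ψ.compAddMonoidHom ((antiCoeff c).toAddMonoidHom.comp f.toAddMonoidHom)

theorem antiChar_apply [Monoid M] (ψ : AddChar R M) (c : G)
    (f : W →ₗ[MonoidAlgebra R G] MonoidAlgebra R G) (w : W) :
    antiChar ψ c f w = ψ (antiCoeff c (f w)) :=
  rfl

theorem antiChar_single_smul_eq_inv [DivisionMonoid M] (ψ : AddChar R M) {c : G} (hc : c * c = 1)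
    (f : W →ₗ[MonoidAlgebra R G] MonoidAlgebra R G) (w : W) :
    antiChar ψ c f (single c (1 : R) • w) = (antiChar ψ c f w)⁻¹ := by
  rw [antiChar_apply, antiChar_apply, map_smul, smul_eq_mul, antiCoeff_single_mul_eq_neg hc,
    AddChar.map_neg_eq_inv]

theorem antiChar_single_smul_of_apply_eq_one [Monoid M] (ψ : AddChar R M) (c g : G)
    {f : W →ₗ[MonoidAlgebra R G] MonoidAlgebra R G} {v : W} (hv : f v = 1) (x : R) :
    antiChar ψ c f (single g x • v) = ψ (antiCoeff c (single g x)) := by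
  rw [antiChar_apply, map_smul, hv, smul_eq_mul, mul_one]

theorem exists_antiChar_single_smul_ne [Monoid M] {ψ : AddChar R M} (hψ : ψ ≠ 1) {c g : G}
    (hc : c ≠ 1) (hg_one : g ≠ 1) (hgc : g ≠ c)
    {f : W →ₗ[MonoidAlgebra R G] MonoidAlgebra R G} {v : W} (hv : f v = 1) :
    ∃ w : W, antiChar ψ c f (single g (1 : R) • w) ≠ antiChar ψ c f w := by
  obtain ⟨x, hx⟩ := AddChar.ne_one_iff.1 hψ
  refine ⟨single (1 : G) x • v, ?_⟩
  have value_at_translate :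
      antiChar ψ c f (single g (1 : R) • single (1 : G) x • v) = 1 := by
    rw [smul_smul, MonoidAlgebra.single_mul_single, mul_one, one_mul,
      antiChar_single_smul_of_apply_eq_one ψ c g hv, antiCoeff_single_of_ne hg_one hgc,
      AddChar.map_zero_eq_one]
  rw [value_at_translate, antiChar_single_smul_of_apply_eq_one ψ c 1 hv, antiCoeff_single_one hc]
  exact hx.symm

end AntiChar

theorem exists_character_conjugate_selfdual_general [Ring R] [Monoid G] [DivisionMonoid M]
    [AddCommGroup W] [Module (MonoidAlgebra R G) W] [Module.Free (MonoidAlgebra R G) W]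
    [Nontrivial W] {c : G} (hc_one : c ≠ 1) (hc_sq : c * c = 1) {ψ : AddChar R M} (hψ : ψ ≠ 1) :
    ∃ χ : AddChar W M,
      (∀ w : W, χ (single c (1 : R) • w) = (χ w)⁻¹) ∧
      ∀ g : G, g ≠ 1 → g ≠ c → ∃ w : W, χ (single g (1 : R) • w) ≠ χ w := by
  obtain ⟨f, v, hv⟩ := exists_linearMap_apply_eq_one (MonoidAlgebra R G) W
  exact ⟨antiChar ψ c f, antiChar_single_smul_eq_inv ψ hc_sq f,
    fun _ hg_one hgc ↦ exists_antiChar_single_smul_ne hψ hc_one hg_one hgc hv⟩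

end

/-- Let `Γ = C × D` with `C = ⟨c⟩` cyclic of order 2 and `D` cyclic of order `m`
(realized as `Multiplicative (ZMod 2) × Multiplicative (ZMod m)`), let `W` be a
nonzero free module over the group algebra `ℚ_p[Γ]`, and let
`ψ : (ℚ_p, +) → ℂ^×` be a non-trivial group homomorphism (additive character).
Then there exists a group homomorphism `χ : (W, +) → ℂ^×` (additive character of
`W`) such that `χ(c · w) = χ(w)⁻¹` for all `w`, and `χ` is stabilized by no
non-trivial element of `D`: for every `d ≠ 1` in `D` there is `w ∈ W` with
`χ(d · w) ≠ χ(w)`. The action of a group element `g` on `W` is via the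
corresponding element `single g 1` of the group algebra. -/
theorem exists_character_conjugate_selfdual (p : ℕ) [Fact p.Prime] (m : ℕ) (hm : 1 ≤ m)
    (W : Type*) [AddCommGroup W]
    [Module (MonoidAlgebra ℚ_[p] (Multiplicative (ZMod 2) × Multiplicative (ZMod m))) W]
    [Module ℚ_[p] W]
    [IsScalarTower ℚ_[p]
      (MonoidAlgebra ℚ_[p] (Multiplicative (ZMod 2) × Multiplicative (ZMod m))) W]
    [Module.Free (MonoidAlgebra ℚ_[p] (Multiplicative (ZMod 2) × Multiplicative (ZMod m))) W]
    (hW : Nontrivial W)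
    (ψ : AddChar ℚ_[p] ℂˣ) (hψ : ∃ x : ℚ_[p], ψ x ≠ 1) :
    ∃ χ : AddChar W ℂˣ,
      (∀ w : W,
        χ ((MonoidAlgebra.single
          ((Multiplicative.ofAdd (1 : ZMod 2), (1 : Multiplicative (ZMod m))) :
            Multiplicative (ZMod 2) × Multiplicative (ZMod m)) (1 : ℚ_[p])) • w)
          = (χ w)⁻¹) ∧
      (∀ d : Multiplicative (ZMod m), d ≠ 1 →
        ∃ w : W,
          χ ((MonoidAlgebra.single
            (((1 : Multiplicative (ZMod 2)), d) :
              Multiplicative (ZMod 2) × Multiplicative (ZMod m)) (1 : ℚ_[p])) • w)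
            ≠ χ w) := by
  obtain ⟨χ, hχ_conj, hχ_stab⟩ := exists_character_conjugate_selfdual_general (W := W)
    (c := ((Multiplicative.ofAdd (1 : ZMod 2), 1) : _ × Multiplicative (ZMod m)))
    (by simp) (by simp [← ofAdd_add, CharTwo.add_self_eq_zero]) (AddChar.ne_one_iff.2 hψ)
  exact ⟨χ, hχ_conj, fun d hd ↦ hχ_stab (1, d) (by simp [hd]) (by simp [hd])⟩
end

section
/- Let n ≥ 2 and let A_1 > A_2 > ... > A_n be real numbers with A_i − A_{i+1} ≥ 2 for all 1 ≤ i ≤ n−1. Set n' = n−1, a_i := −A_{n+1−i} for 1 ≤ i ≤ n, and b_j := A_j − 1/2 for 1 ≤ j ≤ n−1. Then: (1) sp(i, a; b) = 1 for 1 ≤ i ≤ n−1 and sp(i, a; b) = 0 for i ∈ {0, n}; and (2) sp(j, b; a) = 1 for all 0 ≤ j ≤ n−1. (This is the paper's computation of the automorphic split indices of the pair (Π, Π') at the archimedean places v ≠ v_0, where A is the Harish-Chandra parameter at v and Π' is the base change of the auxiliary representation π'(q).) -/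
/-- The split index `sp(i, x; y)` for sequences `x` of length `n` and `y` of
length `n'`: the number of indices `1 ≤ j ≤ n'` with `-x (n+1-i) > y j > -x (n-i)`,
with the formal conventions `x 0 = +∞` and `x (n+1) = -∞`. -/
noncomputable def sp (n n' : ℕ) (x y : ℕ → ℝ) (i : ℕ) : ℕ :=
  ((Finset.Icc 1 n').filter
    (fun j => (i = 0 ∨ y j < -x (n + 1 - i)) ∧ (i = n ∨ -x (n - i) < y j))).card

/-!
The sequences interlace: `A (j + 1) < A j - 1 / 2 < A j`. Passing from `A` to `a` negates and
reverses it, which cancels the negation and reversal in the definition of the split index. Hence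
both kinds of split index count the terms of one of `A`, `b` in a gap between consecutive terms
of the other, and for interlacing sequences comparing `b j` with `A k` amounts to comparing `j`
with `k`.
-/

/-- `B 1, ..., B m` strictly interlace `A 1, ..., A (m + 1)`:
`A 1 > B 1 > A 2 > ... > B m > A (m + 1)`. Values at other indices are irrelevant. -/
def Interlaces {α : Type*} [LT α] (m : ℕ) (A B : ℕ → α) : Prop :=
  ∀ j, 1 ≤ j → j ≤ m → A (j + 1) < B j ∧ B j < A j

/-- The number of terms among `y 1, ..., y n'` in the `i`-th gap of `x 1 > ... > x n`, the open
interval from `x (i + 1)` to `x i`. The disjunctions encode `x 0 = +∞` and `x (n + 1) = -∞`. -/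
def gapCount {α : Type*} [LinearOrder α] (n n' : ℕ) (x y : ℕ → α) (i : ℕ) : ℕ :=
  ((Finset.Icc 1 n').filter
    (fun j => (i = 0 ∨ y j < x i) ∧ (i = n ∨ x (i + 1) < y j))).card

/-- The negated reversal `-x n, ..., -x 1` of `x 1, ..., x n`, which is again decreasing when `x`
is; it takes the parameters `A` to `a`. -/
def negRev {α : Type*} [Neg α] (n : ℕ) (x : ℕ → α) : ℕ → α :=
  fun k => -x (n + 1 - k)

theorem interlaces_sub_const {α : Type*} [AddCommGroup α] [PartialOrder α] [IsOrderedAddMonoid α]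
    {m : ℕ} {A : ℕ → α} {c : α} (hc : 0 < c)
    (hgap : ∀ j, 1 ≤ j → j ≤ m → c < A j - A (j + 1)) :
    Interlaces m A (fun j => A j - c) :=
  fun j hj hjm => ⟨lt_sub_comm.mp (hgap j hj hjm), sub_lt_self _ hc⟩

namespace Interlaces

section Preorder

variable {α : Type*} [Preorder α] {m j k : ℕ} {A B : ℕ → α}

theorem antitoneOn (h : Interlaces m A B) : AntitoneOn A (Set.Icc 1 (m + 1)) :=
  antitoneOn_of_add_one_le Set.ordConnected_Icc fun j _ hj hj' =>
    have ⟨hlower, hupper⟩ := h j hj.1 (Nat.le_of_succ_le_succ hj'.2)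
    (hlower.trans hupper).le

theorem lt_left_of_le (h : Interlaces m A B) (hk : 1 ≤ k) (hkj : k ≤ j) (hj : j ≤ m) :
    B j < A k :=
  (h j (hk.trans hkj) hj).2.trans_le
    (h.antitoneOn ⟨hk, by lia⟩ ⟨by lia, by lia⟩ hkj)

theorem left_lt_of_lt (h : Interlaces m A B) (hj : 1 ≤ j) (hjk : j < k) (hk : k ≤ m + 1) :
    A k < B j :=
  (h.antitoneOn ⟨by lia, by lia⟩ ⟨by lia, hk⟩ hjk).trans_lt (h j hj (by lia)).1

theorem le_of_lt_left (h : Interlaces m A B) (hj : 1 ≤ j) (hk : k ≤ m + 1) (hlt : B j < A k) :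
    k ≤ j :=
  not_lt.mp fun hjk => lt_asymm hlt (h.left_lt_of_lt hj hjk hk)

theorem lt_of_left_lt (h : Interlaces m A B) (hk : 1 ≤ k) (hj : j ≤ m) (hlt : A k < B j) :
    j < k :=
  not_le.mp fun hkj => lt_asymm hlt (h.lt_left_of_le hk hkj hj)

end Preorder

section LinearOrder

variable {α : Type*} [LinearOrder α] {m i : ℕ} {A B : ℕ → α}

theorem gapCount_left_eq_one (h : Interlaces m A B) (hi : 1 ≤ i) (him : i ≤ m) :
    gapCount (m + 1) m A B i = 1 := by
  refine Finset.card_eq_one.mpr ⟨i, ?_⟩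
  ext j
  simp only [Finset.mem_filter, Finset.mem_Icc, Finset.mem_singleton]
  constructor
  · rintro ⟨⟨hj, hjm⟩, hupper, hlower⟩
    have hij : i ≤ j := hupper.elim (by lia) (h.le_of_lt_left hj (by lia))
    have hji : j < i + 1 := hlower.elim (by lia) (h.lt_of_left_lt (by lia) hjm)
    lia
  · rintro rfl
    exact ⟨⟨hi, him⟩, .inr (h j hi him).2, .inr (h j hi him).1⟩

theorem gapCount_left_zero (h : Interlaces m A B) : gapCount (m + 1) m A B 0 = 0 := by
  refine Finset.card_eq_zero.mpr (Finset.filter_eq_empty_iff.mpr fun j hj => ?_)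
  obtain ⟨hj, hjm⟩ := Finset.mem_Icc.mp hj
  have hlt : B j < A 1 := h.lt_left_of_le le_rfl hj hjm
  simp [hlt.not_gt]

theorem gapCount_left_last (h : Interlaces m A B) : gapCount (m + 1) m A B (m + 1) = 0 := by
  refine Finset.card_eq_zero.mpr (Finset.filter_eq_empty_iff.mpr fun j hj => ?_)
  obtain ⟨hj, hjm⟩ := Finset.mem_Icc.mp hj
  have hlt : A (m + 1) < B j := h.left_lt_of_lt hj (by lia) le_rfl
  simp [hlt.not_gt]

theorem gapCount_right_eq_one (h : Interlaces m A B) (him : i ≤ m) :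
    gapCount m (m + 1) B A i = 1 := by
  refine Finset.card_eq_one.mpr ⟨i + 1, ?_⟩
  ext k
  simp only [Finset.mem_filter, Finset.mem_Icc, Finset.mem_singleton]
  constructor
  · rintro ⟨⟨hk, hkm⟩, hupper, hlower⟩
    have hik : i < k := hupper.elim (by lia) (h.lt_of_left_lt hk him)
    have hki : k ≤ i + 1 := hlower.elim (by lia) (h.le_of_lt_left (by lia) hkm)
    lia
  · rintro rfl
    refine ⟨⟨by lia, by lia⟩, ?_, ?_⟩
    · exact i.eq_zero_or_pos.imp_right fun hi => (h i hi him).1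
    · exact him.eq_or_lt.imp_right fun hi => (h (i + 1) (by lia) hi).2

end LinearOrder

end Interlaces

theorem card_filter_Icc_one_reflect (n : ℕ) (p : ℕ → Prop) [DecidablePred p] :
    ((Finset.Icc 1 n).filter (fun k => p (n + 1 - k))).card = ((Finset.Icc 1 n).filter p).card := by
  have hinv : ∀ k ∈ Finset.Icc 1 n, n + 1 - (n + 1 - k) = k := by grind
  refine Finset.card_nbij' (n + 1 - ·) (n + 1 - ·) ?_ ?_ ?_ ?_ <;>
    grind [Set.MapsTo, Set.LeftInvOn]

section SplitIndex

variable {n n' i j : ℕ} {x y : ℕ → ℝ}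

theorem sp_negRev_left (hi : i ≤ n) : sp n n' (negRev n x) y i = gapCount n n' x y i := by
  have hupper : n + 1 - (n + 1 - i) = i := by lia
  have hlower : n + 1 - (n - i) = i + 1 := by lia
  simp only [sp, gapCount, negRev, neg_neg, hupper, hlower]

theorem sp_negRev_right (hj : j ≤ n') :
    sp n' n y (negRev n x) j = gapCount n' n y x (n' - j) := by
  have hsucc : n' + 1 - j = n' - j + 1 := by lia
  have hfirst : n' - j = 0 ↔ j = n' := by lia
  have hlast : n' - j = n' ↔ j = 0 := by lia
  rw [gapCount, ← card_filter_Icc_one_reflect]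
  simp only [sp, negRev, neg_lt_neg_iff, hsucc, hfirst, hlast, and_comm]

end SplitIndex

theorem split_indices_at_other_places_general {m : ℕ} {A B : ℕ → ℝ} (h : Interlaces m A B) :
    (∀ i, 1 ≤ i → i ≤ m → sp (m + 1) m (negRev (m + 1) A) B i = 1) ∧
    sp (m + 1) m (negRev (m + 1) A) B 0 = 0 ∧
    sp (m + 1) m (negRev (m + 1) A) B (m + 1) = 0 ∧
    (∀ j, j ≤ m → sp m (m + 1) B (negRev (m + 1) A) j = 1) := by
  refine ⟨fun i hi him => ?_, ?_, ?_, fun j hj => ?_⟩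
  · rw [sp_negRev_left (by lia), h.gapCount_left_eq_one hi him]
  · rw [sp_negRev_left (by lia), h.gapCount_left_zero]
  · rw [sp_negRev_left le_rfl, h.gapCount_left_last]
  · rw [sp_negRev_right hj, h.gapCount_right_eq_one (Nat.sub_le m j)]

/-- Computation of the automorphic split indices of the pair `(Π, Π')` at an
archimedean place `v ≠ v_0`: with `A_1 > ... > A_n` satisfying `A_i − A_{i+1} ≥ 2`,
`a_i = −A_{n+1−i}` and `b_j = A_j − 1/2` (for `1 ≤ j ≤ n−1`), one has
`sp(i, a; b) = 1` for `1 ≤ i ≤ n−1`, `sp(0, a; b) = sp(n, a; b) = 0`, and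
`sp(j, b; a) = 1` for all `0 ≤ j ≤ n−1`. -/
theorem split_indices_at_other_places (n : ℕ) (hn : 2 ≤ n) (A : ℕ → ℝ)
    (hdec : ∀ i, 1 ≤ i → i < n → A (i + 1) < A i)
    (hgap : ∀ i, 1 ≤ i → i + 1 ≤ n → A i - A (i + 1) ≥ 2) :
    (∀ i, 1 ≤ i → i ≤ n - 1 →
        sp n (n - 1) (fun k => -A (n + 1 - k)) (fun j => A j - 1 / 2) i = 1) ∧
    sp n (n - 1) (fun k => -A (n + 1 - k)) (fun j => A j - 1 / 2) 0 = 0 ∧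
    sp n (n - 1) (fun k => -A (n + 1 - k)) (fun j => A j - 1 / 2) n = 0 ∧
    (∀ j, j ≤ n - 1 →
        sp (n - 1) n (fun j => A j - 1 / 2) (fun k => -A (n + 1 - k)) j = 1) := by
  obtain ⟨m, rfl⟩ := Nat.exists_eq_add_of_le' (one_le_two.trans hn)
  exact split_indices_at_other_places_general <| interlaces_sub_const one_half_pos fun j hj hjm =>
    one_half_lt_one.trans (one_lt_two.trans_le (hgap j hj (Nat.succ_le_succ hjm)))
end
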